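/- Let f : ℝ → (-∞,+∞] be a proper, lower semicontinuous, convex function, and suppose there exist infinitely many pairwise disjoint nonempty open intervals (c_n, d_n) ⊆ dom f (n ∈ ℕ) such that on each (c_n, d_n) the function f is affine with slope s_n, where the slopes s_n are pairwise distinct. Then the Fenchel conjugate f* does not belong to the class F; i.e., f* ∉ F(A) for every finite set A of breakpoints. -/

import Mathlib

/-!
Each affine piece of `f` produces a kink of `f*`: if `f x = s x + e` on `(c, d)`, convexity makes
`x ↦ s x + e` a global minorant of `f`, hence `f* s = -e`, and every `x ∈ (c, d)` is a subgradient
of `f*` at `s` (`fenchel_kink`). A function that is real-valued near `s` and differentiable at `s`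
has at most one subgradient there (`not_kink`), so `s` lies in no interval of the partition on
which `f*` is affine or strictly convex and differentiable; nor in one where `f*` is `+∞`, since
`f* s` is finite. So every slope is a breakpoint, which is impossible for infinitely many distinct
slopes.
-/

noncomputable section


/-- Finite sets of breakpoints `-∞ = b₀ < b₁ < ⋯ < b_m = +∞`. -/
structure Breakpoints where
  m : ℕ
  hm : 0 < m
  pts : ℕ → EReal
  bot : pts 0 = ⊥
  top : pts m = ⊤
  mono : ∀ i j : ℕ, i < j → j ≤ m → pts i < pts j

/-- The `i`-th open interval `(bᵢ, bᵢ₊₁)` determined by the breakpoints. -/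
def Breakpoints.itv (B : Breakpoints) (i : ℕ) : Set ℝ :=
  {x : ℝ | B.pts i < (x : EReal) ∧ (x : EReal) < B.pts (i + 1)}

/-- Convexity for extended-real-valued functions on `ℝ`. -/
def ERealConvex (f : ℝ → EReal) : Prop :=
  ∀ x y a b : ℝ, 0 ≤ a → 0 ≤ b → a + b = 1 →
    f (a * x + b * y) ≤ (a : EReal) * f x + (b : EReal) * f y

/-- The effective domain of an extended-real-valued function nowhere equal to `-∞`. -/
def effDom (f : ℝ → EReal) : Set ℝ := {x : ℝ | f x ≠ ⊤}

/-- `f` is (finite and) affine on `s`. -/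
def IsAffineOn (f : ℝ → EReal) (s : Set ℝ) : Prop :=
  ∃ c d : ℝ, ∀ x ∈ s, f x = ((c * x + d : ℝ) : EReal)

/-- `f` is (finite,) strictly convex and differentiable on `s`. -/
def IsStrictConvexDiffOn (f : ℝ → EReal) (s : Set ℝ) : Prop :=
  ∃ g : ℝ → ℝ, (∀ x ∈ s, f x = (g x : EReal)) ∧ StrictConvexOn ℝ s g ∧
    ∀ x ∈ s, DifferentiableAt ℝ g x

/-- Membership in the class `F(A)` for the breakpoint set `A = B`. -/
def MemFA (B : Breakpoints) (f : ℝ → EReal) : Prop :=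
  (∀ x, f x ≠ ⊥) ∧ LowerSemicontinuous f ∧ ERealConvex f ∧
  ContinuousOn f (effDom f) ∧
  ∀ i : ℕ, i < B.m →
    IsAffineOn f (B.itv i) ∨ IsStrictConvexDiffOn f (B.itv i) ∨
      ∀ x ∈ B.itv i, f x = ⊤

/-- Membership in the class `F`. -/
def MemF (f : ℝ → EReal) : Prop := ∃ B : Breakpoints, MemFA B f

/-- The convex subdifferential of `f : ℝ → (-∞,+∞]` (empty outside the effective domain). -/
def subdiff (f : ℝ → EReal) (x : ℝ) : Set ℝ :=
  {φ : ℝ | f x ≠ ⊤ ∧ ∀ y : ℝ, ((φ * (y - x) : ℝ) : EReal) + f x ≤ f y}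

/-- The Fenchel conjugate of `f : ℝ → (-∞,+∞]`. -/
def fenchel (f : ℝ → EReal) : ℝ → EReal :=
  fun y => ⨆ x : ℝ, (((x * y : ℝ)) : EReal) - f x

/-- An affine piece of a convex function extends to a global minorant. -/
theorem affine_minorant {f : ℝ → EReal} (hbot : ∀ x, f x ≠ ⊥) (hconv : ERealConvex f)
    {c d s e : ℝ} (hcd : c < d)
    (haff : ∀ x ∈ Set.Ioo c d, f x = ((s * x + e : ℝ) : EReal)) (x : ℝ) :
    ((s * x + e : ℝ) : EReal) ≤ f x := by
  by_cases htop : f x = ⊤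
  · simp [htop]
  obtain ⟨v, hv⟩ : ∃ v : ℝ, f x = (v : EReal) := ⟨(f x).toReal, (EReal.coe_toReal htop (hbot x)).symm⟩
  rw [hv, EReal.coe_le_coe_iff]
  set p := (c + d) / 2 with hp
  have hpm : p ∈ Set.Ioo c d := ⟨by linarith, by linarith⟩
  -- a point strictly between `p` and `x`, close enough to `p` to stay in `(c, d)`
  obtain ⟨t, ht0, ht1, htm⟩ : ∃ t : ℝ, 0 < t ∧ t < 1 ∧ (1 - t) * p + t * x ∈ Set.Ioo c d := by
    have hcont : ContinuousAt (fun t : ℝ => (1 - t) * p + t * x) 0 := by fun_prop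
    have h1 : ∀ᶠ t in nhds (0 : ℝ), (1 - t) * p + t * x ∈ Set.Ioo c d :=
      hcont.eventually_mem (by simpa using Ioo_mem_nhds hpm.1 hpm.2)
    have h2 : ∀ᶠ t in nhds (0 : ℝ), t < 1 := eventually_lt_nhds one_pos
    obtain ⟨t, ⟨ha, hb⟩, hc⟩ :=
      (((h1.and h2).filter_mono nhdsWithin_le_nhds).and
        (self_mem_nhdsWithin : Set.Ioi (0 : ℝ) ∈ nhdsWithin 0 (Set.Ioi 0))).exists
    exact ⟨t, hc, hb, ha⟩
  have h := hconv p x (1 - t) t (by linarith) ht0.le (by ring)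
  rw [haff _ htm, haff _ hpm, hv, ← EReal.coe_mul, ← EReal.coe_mul, ← EReal.coe_add,
    EReal.coe_le_coe_iff] at h
  have hmul : t * (s * x + e) ≤ t * v := by nlinarith
  exact le_of_mul_le_mul_left hmul ht0

/-- At the slope `s` of an affine piece of `f` over `(c, d)`, the conjugate is finite and every
point of `(c, d)` is a subgradient. -/
theorem fenchel_kink {f : ℝ → EReal} (hbot : ∀ x, f x ≠ ⊥) (hconv : ERealConvex f)
    {c d s e : ℝ} (hcd : c < d)
    (haff : ∀ x ∈ Set.Ioo c d, f x = ((s * x + e : ℝ) : EReal)) :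
    fenchel f s = ((-e : ℝ) : EReal) ∧
      ∀ x ∈ Set.Ioo c d, ∀ y : ℝ, ((-e + x * (y - s) : ℝ) : EReal) ≤ fenchel f y := by
  have hlow : ∀ x ∈ Set.Ioo c d, ∀ y : ℝ, ((-e + x * (y - s) : ℝ) : EReal) ≤ fenchel f y := by
    intro x hx y
    refine le_trans (le_of_eq ?_) (le_iSup (fun x : ℝ => (((x * y : ℝ)) : EReal) - f x) x)
    simp only [haff x hx]
    rw [← EReal.coe_sub, EReal.coe_eq_coe_iff]
    ring
  refine ⟨le_antisymm (iSup_le fun x => ?_) ?_, hlow⟩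
  · have h := EReal.sub_le_sub (le_refl ((x * s : ℝ) : EReal))
      (affine_minorant hbot hconv hcd haff x)
    refine h.trans (le_of_eq ?_)
    rw [← EReal.coe_sub, EReal.coe_eq_coe_iff]
    ring
  · simpa using hlow ((c + d) / 2) ⟨by linarith, by linarith⟩ s

/-- Two distinct subgradients at `s` exclude differentiability there. -/
theorem not_kink {g : ℝ → ℝ} {s x₁ x₂ : ℝ} (hx : x₁ ≠ x₂) (hg : DifferentiableAt ℝ g s)
    (h₁ : ∀ᶠ y in nhds s, g s + x₁ * (y - s) ≤ g y)
    (h₂ : ∀ᶠ y in nhds s, g s + x₂ * (y - s) ≤ g y) : False := by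
  have key : ∀ x : ℝ, (∀ᶠ y in nhds s, g s + x * (y - s) ≤ g y) → deriv g s = x := by
    intro x h
    have hmin : IsLocalMin (fun y => g y - x * y) s := by
      filter_upwards [h] with y hy
      nlinarith
    have hd : HasDerivAt (fun y => g y - x * y) (deriv g s - x * 1) s :=
      hg.hasDerivAt.sub ((hasDerivAt_id s).const_mul x)
    have := hmin.hasDerivAt_eq_zero hd
    linarith
  exact hx ((key x₁ h₁).symm.trans (key x₂ h₂))

theorem Breakpoints.isOpen_itv (B : Breakpoints) (i : ℕ) : IsOpen (B.itv i) :=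
  (isOpen_lt continuous_const continuous_coe_real_ereal).inter
    (isOpen_lt continuous_coe_real_ereal continuous_const)

theorem Breakpoints.exists_mem_itv (B : Breakpoints) {x : ℝ}
    (hx : ∀ i ≤ B.m, B.pts i ≠ (x : EReal)) : ∃ i < B.m, x ∈ B.itv i := by
  classical
  have hex : ∃ j, (x : EReal) < B.pts j := ⟨B.m, by rw [B.top]; exact EReal.coe_lt_top x⟩
  have hle : Nat.find hex ≤ B.m := Nat.find_min' hex (by rw [B.top]; exact EReal.coe_lt_top x)
  have hspec := Nat.find_spec hex
  rcases h : Nat.find hex with _ | i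
  · rw [h, B.bot] at hspec
    exact absurd hspec not_lt_bot
  · rw [h] at hspec hle
    have hmin := Nat.find_min hex (m := i) (by omega)
    exact ⟨i, by omega, lt_of_le_of_ne (not_lt.mp hmin) (hx i (by omega)), hspec⟩

/-- Necessity of finitely many affine pieces: a proper, lsc, convex function which is
affine with pairwise distinct slopes on infinitely many pairwise disjoint open
subintervals of its domain has a Fenchel conjugate lying outside the class `F`. -/
theorem stmt14 (f : ℝ → EReal) (hbot : ∀ x, f x ≠ ⊥) (hproper : ∃ x : ℝ, f x ≠ ⊤)
    (hlsc : LowerSemicontinuous f) (hconv : ERealConvex f)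
    (c d s : ℕ → ℝ)
    (hne : ∀ k : ℕ, c k < d k)
    (hdom : ∀ k : ℕ, Set.Ioo (c k) (d k) ⊆ effDom f)
    (hdisj : ∀ k l : ℕ, k ≠ l → Disjoint (Set.Ioo (c k) (d k)) (Set.Ioo (c l) (d l)))
    (haff : ∀ k : ℕ, ∃ cst : ℝ, ∀ x ∈ Set.Ioo (c k) (d k), f x = ((s k * x + cst : ℝ) : EReal))
    (hs : Function.Injective s) :
    ¬ MemF (fenchel f) := by
  rintro ⟨B, -, -, -, -, hB⟩
  obtain ⟨k, hk⟩ : ∃ k, ∀ i ≤ B.m, B.pts i ≠ (s k : EReal) := by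
    by_contra! hcon
    have hfin : (Set.range fun k => (s k : EReal)).Finite := by
      refine ((Set.finite_Iic B.m).image B.pts).subset ?_
      rintro _ ⟨k, rfl⟩
      obtain ⟨i, hi, h⟩ := hcon k
      exact ⟨i, hi, h⟩
    exact Set.infinite_range_of_injective (EReal.coe_injective.comp hs) hfin
  obtain ⟨i, him, hi⟩ := B.exists_mem_itv hk
  obtain ⟨e, he⟩ := haff k
  obtain ⟨hval, hsub⟩ := fenchel_kink hbot hconv (hne k) he
  have main : ∀ g : ℝ → ℝ, (∀ x ∈ B.itv i, fenchel f x = (g x : EReal)) →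
      DifferentiableAt ℝ g (s k) → False := by
    intro g hg hd
    have hgs : g (s k) = -e := by
      rw [← EReal.coe_eq_coe_iff, ← hg _ hi, hval]
    have hev : ∀ x ∈ Set.Ioo (c k) (d k),
        ∀ᶠ y in nhds (s k), g (s k) + x * (y - s k) ≤ g y := by
      intro x hx
      filter_upwards [(B.isOpen_itv i).mem_nhds hi] with y hy
      have h := hsub x hx y
      rwa [hg y hy, EReal.coe_le_coe_iff, ← hgs] at h
    obtain ⟨x₁, h₁⟩ := exists_between (hne k)
    obtain ⟨x₂, h₂⟩ := exists_between h₁.2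
    exact not_kink h₂.1.ne hd (hev x₁ h₁) (hev x₂ ⟨h₁.1.trans h₂.1, h₂.2⟩)
  rcases hB i him with ⟨a, b, hab⟩ | ⟨g, hg, -, hd⟩ | htop
  · exact main (fun x => a * x + b) hab (by fun_prop)
  · exact main g hg (hd _ hi)
  · have h := htop _ hi
    rw [hval] at h
    exact EReal.coe_ne_top _ h
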